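/- There is a constant c > 0 such that the following holds. Let p satisfy c·(log n)/n ≤ p ≤ 1 and let G be a random graph distributed as G_{n,p}. Then with probability at least 1 − 1/n², for every set I ⊆ [n] with 1 ≤ |I| ≤ n/2 it holds that |N_G(I)| ≥ min{ |I|·n·p/c , n/c }. -/

import Mathlib

open Finset MeasureTheory

noncomputable section

/-- Out-neighborhood `N_G(I)` of a set of nodes `I`. -/
def nbhd {n : ℕ} (G : SimpleGraph (Fin n)) (I : Finset (Fin n)) : Finset (Fin n) := by
  classical exact Finset.univ.filter (fun v => v ∉ I ∧ ∃ u ∈ I, G.Adj u v)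

/-- The informed sets of the flooding process on the graph sequence `Gs` with source `s`. -/
def informed {n : ℕ} (Gs : ℕ → SimpleGraph (Fin n)) (s : Fin n) : ℕ → Finset (Fin n)
  | 0 => {s}
  | t + 1 => informed Gs s t ∪ nbhd (Gs t) (informed Gs s t)

/-- `G` is an `(h,k)`-expander: every nonempty set of at most `h` nodes has
out-neighborhood of size at least `k` times its size. -/
def IsExpander {n : ℕ} (G : SimpleGraph (Fin n)) (h k : ℝ) : Prop :=
  ∀ I : Finset (Fin n), I.Nonempty → (I.card : ℝ) ≤ h →
    k * (I.card : ℝ) ≤ ((nbhd G I).card : ℝ)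

/-- Euclidean distance in the plane. -/
def euclDist (x y : ℝ × ℝ) : ℝ := Real.sqrt ((x.1 - y.1) ^ 2 + (x.2 - y.2) ^ 2)

/-- The grid `L_{n,ε}` of points `(iε, jε)`, `i, j ∈ ℕ`, `i, j ≤ √n/ε`. -/
def grid (n : ℕ) (ε : ℝ) : Finset (ℝ × ℝ) :=
  (Finset.range (⌊Real.sqrt n / ε⌋₊ + 1) ×ˢ Finset.range (⌊Real.sqrt n / ε⌋₊ + 1)).image
    (fun q => ((q.1 : ℝ) * ε, (q.2 : ℝ) * ε))

/-- `Γ(x)`: grid points within (move) radius `r` of `x`. -/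
def gamma (n : ℕ) (ε r : ℝ) (x : ℝ × ℝ) : Finset (ℝ × ℝ) := by
  classical exact (grid n ε).filter (fun y => euclDist x y ≤ r)

/-- The stationary distribution `π(x) = |Γ(x)| / Σ_y |Γ(y)|` of node positions. -/
def statDist (n : ℕ) (ε r : ℝ) (x : ℝ × ℝ) : ℝ :=
  if x ∈ grid n ε then
    ((gamma n ε r x).card : ℝ) / (∑ y ∈ grid n ε, ((gamma n ε r y).card : ℝ))
  else 0

/-- The `n` random positions `P` are independent, each distributed according to `π`. -/
def IsIIDStationary (n : ℕ) (ε r : ℝ) {Ω : Type} [MeasurableSpace Ω] (μ : Measure Ω)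
    (P : Ω → Fin n → ℝ × ℝ) : Prop :=
  ∀ f : Fin n → ℝ × ℝ, μ {ω | P ω = f} = ENNReal.ofReal (∏ i, statDist n ε r (f i))

/-- Number of cells per side: `m = ⌈√(5n)/R⌉`. -/
def numCells (n : ℕ) (R : ℝ) : ℕ := ⌈Real.sqrt (5 * n) / R⌉₊

/-- Side length of a cell. -/
def cellLen (n : ℕ) (R : ℝ) : ℝ := Real.sqrt n / (numCells n R : ℝ)

/-- Membership of a point `x` in cell `(i,j)` of the `m × m` partition of the square
`[0,√n]²` (cells are half-open, except that the last row/column is closed above,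
points of the square being below `√n` anyway). -/
def inCell (n : ℕ) (R : ℝ) (i j : ℕ) (x : ℝ × ℝ) : Prop :=
  ((i : ℝ) * cellLen n R ≤ x.1 ∧ (x.1 < ((i : ℝ) + 1) * cellLen n R ∨ i + 1 = numCells n R)) ∧
  ((j : ℝ) * cellLen n R ≤ x.2 ∧ (x.2 < ((j : ℝ) + 1) * cellLen n R ∨ j + 1 = numCells n R))

/-- The number of nodes whose positions (given by `p`) lie in cell `(i,j)`. -/
def cellCount (n : ℕ) (R : ℝ) (p : Fin n → ℝ × ℝ) (i j : ℕ) : ℕ := by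
  classical exact (Finset.univ.filter fun v => inCell n R i j (p v)).card

/-- The geometric graph: an edge between distinct `u, v` iff their positions are at
Euclidean distance at most `R`. -/
def geoGraph (n : ℕ) (R : ℝ) (p : Fin n → ℝ × ℝ) : SimpleGraph (Fin n) :=
  SimpleGraph.fromRel (fun u v => euclDist (p u) (p v) ≤ R)

/-- `x` lies in the square `[0,√n]²`. -/
def inSquare (n : ℕ) (x : ℝ × ℝ) : Prop :=
  0 ≤ x.1 ∧ x.1 ≤ Real.sqrt n ∧ 0 ≤ x.2 ∧ x.2 ≤ Real.sqrt n

/-- The random graph `G` is distributed as the Erdős–Rényi graph `G_{n,p}`. -/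
def IsErdosRenyi {n : ℕ} {Ω : Type} [MeasurableSpace Ω] (μ : Measure Ω)
    (G : Ω → SimpleGraph (Fin n)) (p : ℝ) : Prop :=
  ∀ H : SimpleGraph (Fin n),
    μ {ω | G ω = H} =
      ENNReal.ofReal (p ^ (Nat.card H.edgeSet) * (1 - p) ^ (n.choose 2 - Nat.card H.edgeSet))

/-!
There is no edge between disjoint sets `I` and `T` with probability `(1 - p) ^ (|I| |T|)`. Expanding
`x ^ |N(I)|` over the sets `T` of nodes outside `I` and its neighborhood turns this into the exact
generating function `((1 - x) (1 - p) ^ |I| + x) ^ (n - |I|)` of `|N(I)|`. At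
`x = exp (-(1 + |I| p))` Chernoff's bound shows that a set `I` of at most `n / 2` nodes fails to
expand with probability at most `exp (-|I| n p / 6) ≤ n ^ (-4 |I|)`, and the union bound over all
nonempty `I` gives `(1 + n ^ (-4)) ^ n - 1 ≤ 1 / n ^ 2`.
-/

section Elementary

theorem pow_card_eq_sum_powerset_sdiff {ι R : Type*} [DecidableEq ι] [CommRing R] {A S : Finset ι}
    (h : A ⊆ S) (x : R) :
    x ^ #A = ∑ T ∈ (S \ A).powerset, (1 - x) ^ #T * x ^ (#S - #T) := by
  have hone : ∑ T ∈ (S \ A).powerset, (1 - x) ^ #T * x ^ (#(S \ A) - #T) = 1 := by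
    rw [sum_pow_mul_eq_add_pow, sub_add_cancel, one_pow]
  conv_lhs => rw [← mul_one (x ^ #A), ← hone, mul_sum]
  refine sum_congr rfl fun T hT ↦ ?_
  have hexp : #S - #T = #A + (#(S \ A) - #T) := by
    have := card_le_card (mem_powerset.1 hT)
    have := card_sdiff_add_card_eq_card h
    omega
  rw [hexp, pow_add]
  ring

theorem sum_erase_empty_pow_card {ι R : Type*} [Fintype ι] [DecidableEq ι] [CommRing R] (t : R) :
    ∑ I ∈ univ.erase (∅ : Finset ι), t ^ #I = (1 + t) ^ Fintype.card ι - 1 := by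
  have hall : ∑ I : Finset ι, t ^ #I = (1 + t) ^ Fintype.card ι := by
    simpa [add_comm] using Fintype.sum_pow_mul_eq_add_pow ι t 1
  rw [← hall, eq_sub_iff_add_eq, ← sum_erase_add _ _ (mem_univ ∅), card_empty, pow_zero]

theorem one_sub_exp_mul_exp_add_le {y : ℝ} (hy : 0 ≤ y) :
    (1 - Real.exp (-(1 + y))) * Real.exp (-y) + Real.exp (-(1 + y)) ≤ Real.exp (-(y / 2)) := by
  have he : Real.exp (-1) ≤ 1 / 2 := by linarith [Real.exp_neg_one_lt_d9]
  have hy1 : 0 ≤ 1 - Real.exp (-y) := by simpa using hy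
  calc
    _ = Real.exp (-y) * (Real.exp (-1) * (1 - Real.exp (-y)) + 1) := by
      rw [show -(1 + y) = -1 + -y by ring, Real.exp_add]
      ring
    _ ≤ Real.exp (-y) * (1 / 2 * y + 1) := by
      gcongr
      linarith [Real.add_one_le_exp (-y)]
    _ ≤ Real.exp (-y) * Real.exp (1 / 2 * y) := by
      gcongr
      exact Real.add_one_le_exp _
    _ = Real.exp (-(y / 2)) := by
      rw [← Real.exp_add]
      ring_nf

theorem one_add_pow_sub_one_le {n : ℕ} {t : ℝ} (ht : 0 ≤ t) (hnt : n * t ≤ 1) :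
    (1 + t) ^ n - 1 ≤ 2 * (n * t) := by
  have hnt0 : 0 ≤ n * t := by positivity
  calc
    (1 + t) ^ n - 1 ≤ Real.exp t ^ n - 1 := by
      gcongr
      linarith [Real.add_one_le_exp t]
    _ ≤ |Real.exp (n * t) - 1| := by
      rw [← Real.exp_nat_mul]
      exact le_abs_self _
    _ ≤ 2 * |n * t| := Real.abs_exp_sub_one_le (by rwa [abs_of_nonneg hnt0])
    _ = 2 * (n * t) := by rw [abs_of_nonneg hnt0]

end Elementary

section AvoidedEdges

open ProbabilityTheory unitInterval
open scoped SimpleGraph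

theorem setBernoulli_real_disjoint {ι : Type*} {u : Set ι} {F : Finset ι} (p : unitInterval)
    (hF : ↑F ⊆ u) : setBer(u, p).real {s | Disjoint s ↑F} = (1 - p : ℝ) ^ #F := by
  have hbox : (fun q : ι → Prop ↦ {i | q i}) ⁻¹' {s | Disjoint s ↑F} =
      Set.pi F fun _ ↦ {False} := by
    ext q
    simp [Set.disjoint_right]
  have hfactor : ∀ i ∈ F, (toNNReal p • Measure.dirac (i ∈ u) +
      toNNReal (σ p) • Measure.dirac False) {False} = (toNNReal (σ p) : ENNReal) := by
    intro i hi
    simp [show i ∈ u from hF hi]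
  rw [measureReal_def, setBernoulli_apply', hbox,
    Measure.infinitePi_pi _ fun _ _ ↦ .of_discrete, prod_congr rfl hfactor]
  simp

variable {V : Type*} [Countable V]

instance measurableSingletonClass_simpleGraph : MeasurableSingletonClass (SimpleGraph V) where
  measurableSet_singleton G := by
    rw [← SimpleGraph.measurableEmbedding_edgeSet.measurableSet_image, Set.image_singleton]
    exact measurableSet_singleton _

theorem binomialRandom_real_disjoint_edgeSet {F : Finset (Sym2 V)} (p : unitInterval)
    (hF : ↑F ⊆ (Sym2.diagSetᶜ : Set (Sym2 V))) :
    G(V, p).real {G | Disjoint G.edgeSet ↑F} = (1 - p : ℝ) ^ #F := by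
  have hmeas : MeasurableSet {G : SimpleGraph V | Disjoint G.edgeSet ↑F} := by
    simp only [Set.disjoint_right]
    measurability
  have hpre : SimpleGraph.fromEdgeSet ⁻¹' {G : SimpleGraph V | Disjoint G.edgeSet ↑F} =
      {s | Disjoint s ↑F} := by
    ext s
    simp only [Set.mem_preimage, Set.mem_ofPred_eq, Set.disjoint_right,
      SimpleGraph.edgeSet_fromEdgeSet, Set.mem_sdiff, not_and_not_right]
    exact forall₂_congr fun e he ↦ ⟨fun h hs ↦ hF he (h hs), fun h hs ↦ absurd hs h⟩
  rw [← setBernoulli_real_disjoint p hF, SimpleGraph.binomialRandom_eq_map,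
    map_measureReal_apply SimpleGraph.measurable_fromEdgeSet hmeas, hpre]

theorem binomialRandom_real_no_edge_between {A B : Finset V} (p : unitInterval)
    (hAB : Disjoint A B) :
    G(V, p).real {G | ∀ u ∈ A, ∀ v ∈ B, ¬ G.Adj u v} = (1 - p : ℝ) ^ (#A * #B) := by
  classical
  set F : Finset (Sym2 V) := (A ×ˢ B).image fun q ↦ s(q.1, q.2) with hF
  have hdiag : ↑F ⊆ (Sym2.diagSetᶜ : Set (Sym2 V)) := by
    simp only [hF, Set.subset_def, mem_coe, forall_mem_image, mem_product]
    rintro ⟨u, v⟩ ⟨hu, hv⟩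
    simpa using hAB.forall_ne_finset hu hv
  have hcard : #F = #A * #B := by
    rw [card_image_of_injOn, card_product]
    rintro ⟨a, b⟩ hab ⟨c, d⟩ hcd h
    simp only [mem_coe, mem_product] at hab hcd
    rcases Sym2.eq_iff.1 h with ⟨rfl, rfl⟩ | ⟨rfl, rfl⟩
    · rfl
    · exact absurd rfl (hAB.forall_ne_finset hab.1 hcd.2)
  have hevent : {G : SimpleGraph V | ∀ u ∈ A, ∀ v ∈ B, ¬ G.Adj u v} =
      {G | Disjoint G.edgeSet ↑F} := by
    ext G
    simp only [hF, Set.mem_ofPred_eq, Set.disjoint_right, mem_coe, forall_mem_image, mem_product,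
      Prod.forall, SimpleGraph.mem_edgeSet, and_imp]
    exact ⟨fun h u v hu hv ↦ h u hu v hv, fun h u hu v hv ↦ h u v hu hv⟩
  rw [hevent, binomialRandom_real_disjoint_edgeSet p hdiag, hcard]

end AvoidedEdges

section Concentration

open ProbabilityTheory
open scoped SimpleGraph

variable {n : ℕ} (p : unitInterval)

theorem mem_nbhd {G : SimpleGraph (Fin n)} {I : Finset (Fin n)} {v : Fin n} :
    v ∈ nbhd G I ↔ v ∉ I ∧ ∃ u ∈ I, G.Adj u v := by
  simp [nbhd]

theorem nbhd_subset_compl (G : SimpleGraph (Fin n)) (I : Finset (Fin n)) : nbhd G I ⊆ Iᶜ :=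
  fun _ hv ↦ mem_compl.2 (mem_nbhd.1 hv).1

theorem subset_compl_sdiff_nbhd_iff {G : SimpleGraph (Fin n)} {I T : Finset (Fin n)}
    (hT : T ⊆ Iᶜ) :
    T ⊆ Iᶜ \ nbhd G I ↔ ∀ u ∈ I, ∀ v ∈ T, ¬ G.Adj u v := by
  simp only [subset_sdiff, hT, true_and, disjoint_left, mem_nbhd]
  have hv : ∀ v ∈ T, v ∉ I := fun v hv ↦ mem_compl.1 (hT hv)
  grind

theorem integral_pow_card_nbhd (I : Finset (Fin n)) (x : ℝ) :
    ∫ G, x ^ #(nbhd G I) ∂G(Fin n, p) = ((1 - x) * (1 - p : ℝ) ^ #I + x) ^ (n - #I) := by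
  have hexpand (G : SimpleGraph (Fin n)) : x ^ #(nbhd G I) = ∑ T ∈ Iᶜ.powerset,
      {G : SimpleGraph (Fin n) | ∀ u ∈ I, ∀ v ∈ T, ¬ G.Adj u v}.indicator
        (fun _ ↦ (1 - x) ^ #T * x ^ (#Iᶜ - #T)) G := by
    classical
    rw [pow_card_eq_sum_powerset_sdiff (nbhd_subset_compl G I)]
    simp only [Set.indicator_apply, Set.mem_ofPred_eq]
    rw [← sum_filter]
    refine sum_congr ?_ fun _ _ ↦ rfl
    ext T
    simp only [mem_filter, mem_powerset]
    refine ⟨fun h ↦ ?_, fun h ↦ (subset_compl_sdiff_nbhd_iff h.1).2 h.2⟩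
    have hT := h.trans sdiff_subset
    exact ⟨hT, (subset_compl_sdiff_nbhd_iff hT).1 h⟩
  have hcompl : n - #I = #Iᶜ := by rw [card_compl, Fintype.card_fin]
  simp_rw [hexpand]
  rw [integral_finsetSum _ fun _ _ ↦ .of_finite, hcompl, ← sum_pow_mul_eq_add_pow]
  refine sum_congr rfl fun T hT ↦ ?_
  rw [integral_indicator_const _ .of_discrete, binomialRandom_real_no_edge_between p
    (disjoint_compl_right.mono_right (mem_powerset.1 hT)), smul_eq_mul, mul_pow, pow_mul]
  ring

theorem integral_exp_card_nbhd_le {I : Finset (Fin n)} (hI : (#I : ℝ) ≤ n / 2) :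
    ∫ G, Real.exp (-(1 + #I * p)) ^ #(nbhd G I) ∂G(Fin n, p) ≤
      Real.exp (-(#I * n * p / 4)) := by
  set y : ℝ := #I * p with hy
  have hp1 : 0 ≤ 1 - (p : ℝ) := unitInterval.one_minus_nonneg p
  have hy0 : 0 ≤ y := mul_nonneg (Nat.cast_nonneg _) p.2.1
  have hx : 0 ≤ 1 - Real.exp (-(1 + y)) := by
    rw [sub_nonneg, Real.exp_le_one_iff]
    linarith
  have hpow : (1 - p : ℝ) ^ #I ≤ Real.exp (-y) := by
    rw [hy, ← mul_neg, Real.exp_nat_mul]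
    gcongr
    exact Real.one_sub_le_exp_neg _
  have hcompl : ((n - #I : ℕ) : ℝ) = n - #I :=
    Nat.cast_sub (by simpa using card_le_univ I)
  calc
    _ = ((1 - Real.exp (-(1 + y))) * (1 - p : ℝ) ^ #I + Real.exp (-(1 + y))) ^ (n - #I) :=
      integral_pow_card_nbhd p I _
    _ ≤ ((1 - Real.exp (-(1 + y))) * Real.exp (-y) + Real.exp (-(1 + y))) ^ (n - #I) := by
      gcongr
    _ ≤ Real.exp (-(y / 2)) ^ (n - #I) := by
      have := mul_nonneg hx (Real.exp_nonneg (-y))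
      gcongr
      exact one_sub_exp_mul_exp_add_le hy0
    _ = Real.exp (-((n - #I) * (y / 2))) := by
      rw [← Real.exp_nat_mul, hcompl, mul_neg]
    _ ≤ Real.exp (-(n / 2 * (y / 2))) := by
      gcongr
      linarith
    _ = Real.exp (-(#I * n * p / 4)) := by
      rw [hy]
      ring_nf

-- The Chernoff parameter `1 + |I| p` serves both regimes: it is at least `1`, which makes the
-- moment generating function small when `|I| p ≤ 1`, and of order `|I| p` otherwise.
theorem binomialRandom_real_card_nbhd_le {I : Finset (Fin n)} (c : ℝ)
    (hI : (#I : ℝ) ≤ n / 2) :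
    G(Fin n, p).real {G | (#(nbhd G I) : ℝ) ≤ min (#I * n * (p : ℝ) / c) (n / c)} ≤
      Real.exp (-((1 / 4 - 2 / c) * (#I * n * p))) := by
  have hy : 0 ≤ #I * (p : ℝ) := mul_nonneg (Nat.cast_nonneg _) p.2.1
  set s : ℝ := min (#I * n * p / c) (n / c)
  have hs : (1 + #I * (p : ℝ)) * s ≤ 2 / c * (#I * n * p) := by
    have hmin := mul_le_mul_of_nonneg_left (min_le_right (#I * n * (p : ℝ) / c) (n / c)) hy
    calc
      (1 + #I * (p : ℝ)) * s = s + #I * p * s := by ring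
      _ ≤ #I * n * (p : ℝ) / c + #I * p * (n / c) := add_le_add (min_le_left _ _) hmin
      _ = 2 / c * (#I * n * p) := by ring
  calc
    _ ≤ Real.exp ((1 + #I * (p : ℝ)) * s) *
        mgf (fun G ↦ (#(nbhd G I) : ℝ)) G(Fin n, p) (-(1 + #I * p)) := by
      simpa only [neg_neg] using measure_le_le_exp_mul_mgf s (t := -(1 + #I * p))
        (by linarith) .of_finite
    _ = Real.exp ((1 + #I * (p : ℝ)) * s) *
        ∫ G, Real.exp (-(1 + #I * p)) ^ #(nbhd G I) ∂G(Fin n, p) := by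
      simp only [mgf, ← Real.exp_nat_mul, mul_comm]
    _ ≤ Real.exp (2 / c * (#I * n * p)) * Real.exp (-(#I * n * p / 4)) := by
      gcongr ?_ * ?_
      · exact Real.exp_le_exp.2 hs
      · exact integral_exp_card_nbhd_le p hI
    _ = Real.exp (-((1 / 4 - 2 / c) * (#I * n * p))) := by
      rw [← Real.exp_add]
      ring_nf

end Concentration

section ErdosRenyi

open scoped SimpleGraph
variable {n : ℕ} {p : unitInterval}

theorem IsErdosRenyi.measure_preimage_le {Ω : Type} [MeasurableSpace Ω] {μ : Measure Ω}
    {G : Ω → SimpleGraph (Fin n)}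
    (hG : IsErdosRenyi μ G p) (S : Set (SimpleGraph (Fin n))) :
    μ (G ⁻¹' S) ≤ G(Fin n, p) S := by
  have hpoint (H : SimpleGraph (Fin n)) : μ {ω | G ω = H} = G(Fin n, p) {H} := by
    rw [hG H, Nat.card_coe_set_eq, ← ENNReal.ofReal_toReal (measure_ne_top G(Fin n, p) {H}),
      SimpleGraph.binomialRandom_singleton]
    simp
  classical
  calc
    μ (G ⁻¹' S) = μ (⋃ H ∈ S.toFinset, {ω | G ω = H}) := by
      congr 1
      ext ω
      simp
    _ ≤ ∑ H ∈ S.toFinset, μ {ω | G ω = H} := measure_biUnion_finset_le _ _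
    _ = G(Fin n, p) S := by
      simp_rw [hpoint]
      rw [sum_measure_singleton, Set.coe_toFinset]

theorem IsErdosRenyi.measure_preimage {Ω : Type} [MeasurableSpace Ω] {μ : Measure Ω}
    [IsProbabilityMeasure μ] {G : Ω → SimpleGraph (Fin n)}
    (hG : IsErdosRenyi μ G p) (S : Set (SimpleGraph (Fin n))) :
    μ (G ⁻¹' S) = G(Fin n, p) S := by
  -- `G` is not assumed measurable, so the lower bound comes from covering `Ω` by the events that
  -- `G` lies in `S` and in its complement.
  refine le_antisymm (hG.measure_preimage_le S) ?_
  have hcover : 1 ≤ μ (G ⁻¹' S) + G(Fin n, p) Sᶜ := by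
    calc
      1 = μ (G ⁻¹' S ∪ G ⁻¹' Sᶜ) := by
        rw [← Set.preimage_union, Set.union_compl_self, Set.preimage_univ, measure_univ]
      _ ≤ μ (G ⁻¹' S) + μ (G ⁻¹' Sᶜ) := measure_union_le _ _
      _ ≤ μ (G ⁻¹' S) + G(Fin n, p) Sᶜ := by
        gcongr
        exact hG.measure_preimage_le _
  rw [← prob_add_prob_compl (μ := G(Fin n, p)) (s := S) .of_discrete] at hcover
  exact (ENNReal.add_le_add_iff_right (measure_ne_top _ _)).1 hcover

end ErdosRenyi

section Expansion

open scoped SimpleGraph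
variable {n : ℕ} {p : unitInterval}

/-- The graphs in which every nonempty set `I` of at most half of the nodes has a neighborhood of
size at least `min (|I| n p / c) (n / c)`; for `G_{n,p}` this is the event whose probability is
bounded. -/
def expanders (n : ℕ) (c p : ℝ) : Set (SimpleGraph (Fin n)) :=
  {G | ∀ I : Finset (Fin n), I.Nonempty → (#I : ℝ) ≤ n / 2 →
    min (#I * n * p / c) (n / c) ≤ #(nbhd G I)}

-- The constant `24` makes the exponent `24 (1 / 4 - 2 / 24)` equal to `4`.
theorem binomialRandom_real_card_nbhd_le_inv_pow {I : Finset (Fin n)}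
    (hlog : 24 * Real.log n ≤ n * p) (hn : 0 < n) (hI : (#I : ℝ) ≤ n / 2) :
    G(Fin n, p).real {G | (#(nbhd G I) : ℝ) ≤ min (#I * n * (p : ℝ) / 24) (n / 24)} ≤
      ((n : ℝ) ^ 4)⁻¹ ^ #I := by
  have hn' : (0 : ℝ) < n := by exact_mod_cast hn
  calc
    _ ≤ Real.exp (-((1 / 4 - 2 / 24) * (#I * n * p))) := binomialRandom_real_card_nbhd_le p 24 hI
    _ ≤ Real.exp (#I * -((4 : ℕ) * Real.log n)) := by
      gcongr
      have := mul_le_mul_of_nonneg_left hlog (Nat.cast_nonneg (α := ℝ) #I)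
      push_cast
      linarith
    _ = ((n : ℝ) ^ 4)⁻¹ ^ #I := by
      rw [Real.exp_nat_mul, Real.exp_neg, Real.exp_nat_mul, Real.exp_log hn']

theorem binomialRandom_real_compl_expanders_le (hn : 2 ≤ n) (hlog : 24 * Real.log n ≤ n * p) :
    G(Fin n, p).real (expanders n 24 p)ᶜ ≤ 1 / (n : ℝ) ^ 2 := by
  have hn' : (2 : ℝ) ≤ n := by exact_mod_cast hn
  set small : Finset (Finset (Fin n)) := {I | I.Nonempty ∧ (#I : ℝ) ≤ n / 2}
  have hcover : (expanders n 24 p)ᶜ ⊆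
      ⋃ I ∈ small, {G | (#(nbhd G I) : ℝ) ≤ min (#I * n * (p : ℝ) / 24) (n / 24)} := by
    intro G hG
    simp only [expanders, Set.mem_compl_iff, Set.mem_ofPred_eq, not_forall, not_le] at hG
    obtain ⟨I, hI, hIn, hlt⟩ := hG
    exact Set.mem_biUnion (mem_filter.2 ⟨mem_univ I, hI, hIn⟩) hlt.le
  calc
    _ ≤ ∑ I ∈ small, G(Fin n, p).real
        {G | (#(nbhd G I) : ℝ) ≤ min (#I * n * (p : ℝ) / 24) (n / 24)} :=
      (measureReal_mono hcover (measure_ne_top _ _)).trans (measureReal_biUnion_finset_le _ _)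
    _ ≤ ∑ I ∈ small, ((n : ℝ) ^ 4)⁻¹ ^ #I := by
      gcongr with I hI
      exact binomialRandom_real_card_nbhd_le_inv_pow hlog (by omega) (mem_filter.1 hI).2.2
    _ ≤ ∑ I ∈ univ.erase ∅, ((n : ℝ) ^ 4)⁻¹ ^ #I := by
      refine sum_le_sum_of_subset_of_nonneg (fun I hI ↦ ?_) fun _ _ _ ↦ by positivity
      exact mem_erase.2 ⟨(mem_filter.1 hI).2.1.ne_empty, mem_univ I⟩
    _ = (1 + ((n : ℝ) ^ 4)⁻¹) ^ n - 1 := by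
      rw [sum_erase_empty_pow_card, Fintype.card_fin]
    _ ≤ 2 * (n * ((n : ℝ) ^ 4)⁻¹) := by
      refine one_add_pow_sub_one_le (by positivity) ?_
      rw [← div_eq_mul_inv]
      exact div_le_one_of_le₀ (le_self_pow₀ (by linarith) (by norm_num)) (by positivity)
    _ = 2 / n * (1 / (n : ℝ) ^ 2) := by field_simp
    _ ≤ 1 / (n : ℝ) ^ 2 :=
      mul_le_of_le_one_left (by positivity) (div_le_one_of_le₀ hn' (by positivity))

end Expansion

/-- neighborhood expansion of the Erdős–Rényi graph `G_{n,p}`. -/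
theorem er_neighborhood_expansion :
    ∃ c : ℝ, 0 < c ∧
      ∀ (n : ℕ) (p : ℝ) (Ω : Type) [MeasurableSpace Ω] (μ : Measure Ω)
        [IsProbabilityMeasure μ] (G : Ω → SimpleGraph (Fin n)),
        2 ≤ n → c * Real.log n / n ≤ p → p ≤ 1 →
        IsErdosRenyi μ G p →
        ENNReal.ofReal (1 - 1 / (n : ℝ) ^ 2) ≤
          μ {ω | ∀ I : Finset (Fin n), I.Nonempty → (I.card : ℝ) ≤ (n : ℝ) / 2 →
            min ((I.card : ℝ) * n * p / c) ((n : ℝ) / c) ≤ ((nbhd (G ω) I).card : ℝ)} := by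
  refine ⟨24, by norm_num, fun n p Ω _ μ _ G hn hlog hp1 hG ↦ ?_⟩
  have hn' : (0 : ℝ) < n := by exact_mod_cast zero_lt_two.trans_le hn
  have hp0 : 0 ≤ p := le_trans (by positivity) hlog
  lift p to unitInterval using ⟨hp0, hp1⟩
  have hfail := binomialRandom_real_compl_expanders_le hn ((div_le_iff₀' hn').1 hlog)
  change _ ≤ μ (G ⁻¹' expanders n 24 p)
  rw [hG.measure_preimage, ← ofReal_measureReal]
  gcongr
  rw [probReal_compl_eq_one_sub .of_discrete] at hfail
  linarith

end
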